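/- Let n, t be natural numbers with n > 2·t, indexing a check committee, and let M ⊆ Fin n be the set of malicious committee members. Let g : Fin n → ℝ be arbitrary per-validator scores. Define the extreme scores f by f j = 1 for j ∈ M and f j = g j for j ∉ M, and let h : Fin n → ℝ be any other manipulated scores with h j ≤ 1 for j ∈ M and h j = g j for j ∉ M. Then the t-trimmed mean of h is less than or equal to the t-trimmed mean of f. In particular, for a malicious client, the extreme check-score manipulation yields an aggregated check score at least as large as under any other manipulation. -/

import Mathlib

/-- The `k`-th order statistic (0-indexed) of `x : Fin n → ℝ`: the `k`-th entry of
the list obtained by sorting the `n` values of `x` in ascending order. -/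
noncomputable def orderStat {n : ℕ} (x : Fin n → ℝ) (k : Fin n) : ℝ :=
  x (Tuple.sort x k)

/-- The `t`-trimmed mean of `x : Fin n → ℝ` (for `n > 2·t`): the average of the
entries that remain after sorting `x` in ascending order and discarding the
smallest `t` and the largest `t` entries. -/
noncomputable def trimmedMean {n : ℕ} (t : ℕ) (x : Fin n → ℝ) : ℝ :=
  (∑ k ∈ Finset.univ.filter (fun k : Fin n => t ≤ (k : ℕ) ∧ (k : ℕ) < n - t),
      orderStat x k) / ((n - 2 * t : ℕ) : ℝ)

theorem orderStat_mono_aux {n : ℕ} (x y : Fin n → ℝ) (hxy : ∀ j, x j ≤ y j) (k : Fin n) :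
    orderStat x k ≤ orderStat y k := by
  obtain ⟨a, hak, hka⟩ : ∃ a, a ≤ k ∧ k ≤ (Tuple.sort x).symm (Tuple.sort y a) := by
    by_contra! hc
    have hcard : (Finset.Iic k).card ≤ (Finset.Iio k).card :=
      Finset.card_le_card_of_injOn (fun a => (Tuple.sort x).symm (Tuple.sort y a))
        (fun a ha => by simpa using hc a (by simpa using ha))
        (fun a _ b _ hab => by simpa using hab)
    simp at hcard
  have h1 := Tuple.monotone_sort x hka
  have h2 := Tuple.monotone_sort y hak
  simp only [Function.comp_apply, Equiv.apply_symm_apply] at h1 h2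
  exact h1.trans ((hxy _).trans h2)

/-- **Optimality of the extreme manipulation for a malicious client.**
Let `n > 2·t` index a check committee with malicious members `M ⊆ Fin n`, and let
`g` be arbitrary per-validator scores. The extreme scores `f` set `f j = 1` for
`j ∈ M` and `f j = g j` otherwise. For any other manipulated scores `h` with
`h j ≤ 1` for `j ∈ M` and `h j = g j` for `j ∉ M`, the `t`-trimmed mean of `h` is
at most the `t`-trimmed mean of `f`. -/
theorem trimmedMean_le_extreme_manipulation {n t : ℕ} (hn : 2 * t < n)
    (M : Finset (Fin n)) (g h : Fin n → ℝ)
    (hM : ∀ j ∈ M, h j ≤ 1) (hMc : ∀ j ∉ M, h j = g j) :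
    trimmedMean t h ≤ trimmedMean t (fun j => if j ∈ M then (1 : ℝ) else g j) := by
  unfold trimmedMean
  refine div_le_div_of_nonneg_right (Finset.sum_le_sum fun k _ => ?_) (Nat.cast_nonneg _)
  refine orderStat_mono_aux _ _ (fun j => ?_) k
  by_cases hj : j ∈ M
  · simpa [hj] using hM j hj
  · simpa [hj] using (hMc j hj).le
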